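/- Let G be a group and K a subgroup such that |x^G| ≤ n for each x ∈ K, where n is a positive integer. Then the derived (commutator) subgroup of the normal closure H = ⟨K^G⟩ is finite, with order bounded by a function of n only. -/

import Mathlib

/-!
Let `X` be the set of conjugates of elements of `K`, so that `H = ⟨X⟩`, and choose `a ∈ K` whose
`H`-orbit under conjugation is as large as possible. Each point of this orbit is `b a b⁻¹` with `b`
a product of at most `n` elements of `X`, so the centralizer `U` of these `b` has bounded index. For
`u ∈ K ∩ U` the orbit of `u a` contains, and hence by maximality equals, `u` times the orbit of `a`;
therefore `[H, u]` lies in every normal subgroup containing `[H, a]`. Consequently `[H, H] ≤ N`,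
where `N` is the normal closure of `[H, T]` and `T` consists of `a` and representatives of the
cosets of `K ∩ U` in `K`.

The group `M` generated by the conjugates of `T` has a centre of bounded index `i`, and `x ↦ x ^ i`
is a homomorphism from `M` to its centre by transfer. Since `x ^ n!` commutes with `H` for every
conjugate `x` of an element of `T`, it follows that `N` has exponent dividing `i * n!`. Being
generated by a bounded number of elements, with centre of bounded index, `N` is finite by Schreier's
lemma.
-/

open scoped Pointwise commutatorElement Nat
open Subgroup

variable {G : Type*} [Group G]

/-- The element `x` has at most `n` conjugates in `G`. Finiteness is required separately because
`Nat.card` of an infinite type is `0`. -/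
def HasConjBound (n : ℕ) (x : G) : Prop :=
  (conjugatesOf x).Finite ∧ Nat.card (conjugatesOf x) ≤ n

lemma index_centralizer_singleton (x : G) :
    (centralizer {x}).index = Nat.card (conjugatesOf x) := by
  have h := MulAction.index_stabilizer (ConjAct G) x
  rwa [ConjAct.stabilizer_eq_centralizer, ConjAct.orbit_eq_carrier_conjClasses] at h

lemma conjugatesOf_mul_subset (x y : G) :
    conjugatesOf (x * y) ⊆ conjugatesOf x * conjugatesOf y := by
  intro z hz
  obtain ⟨g, rfl⟩ := isConj_iff.1 (show IsConj (x * y) z from hz)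
  exact ⟨g * x * g⁻¹, isConj_iff.2 ⟨g, rfl⟩, g * y * g⁻¹, isConj_iff.2 ⟨g, rfl⟩, conj_mul⟩

namespace HasConjBound

variable {m n : ℕ} {x y : G}

lemma finiteIndex_centralizer (hx : HasConjBound n x) : (centralizer {x}).FiniteIndex := by
  rw [finiteIndex_iff, index_centralizer_singleton]
  exact Set.ncard_ne_zero_of_mem mem_conjugatesOf_self hx.1

lemma index_centralizer_le (hx : HasConjBound n x) : (centralizer {x}).index ≤ n :=
  (index_centralizer_singleton x).trans_le hx.2

lemma pos (hx : HasConjBound n x) : 0 < n :=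
  have := hx.finiteIndex_centralizer
  (Nat.pos_of_ne_zero FiniteIndex.index_ne_zero).trans_le hx.index_centralizer_le

lemma of_isConj (hx : HasConjBound n x) (hxy : IsConj x y) : HasConjBound n y := by
  rwa [HasConjBound, ← hxy.conjugatesOf_eq]

lemma mul (hx : HasConjBound m x) (hy : HasConjBound n y) : HasConjBound (m * n) (x * y) := by
  have hfin : (conjugatesOf x * conjugatesOf y).Finite := hx.1.mul hy.1
  refine ⟨hfin.subset (conjugatesOf_mul_subset x y), ?_⟩
  exact (Set.ncard_le_ncard (conjugatesOf_mul_subset x y) hfin).trans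
    (Set.natCard_mul_le.trans (Nat.mul_le_mul hx.2 hy.2))

lemma of_mem_pow {X : Set G} (hX : ∀ x ∈ X, HasConjBound n x) :
    ∀ {k : ℕ}, ∀ y ∈ X ^ k, HasConjBound (n ^ k) y
  | 0, y, hy => by
    obtain rfl : y = 1 := by simpa using hy
    have h : conjugatesOf (1 : G) = {1} := by ext; simp [conjugatesOf]
    simp [HasConjBound, h]
  | k + 1, y, hy => by
    rw [pow_succ] at hy ⊢
    obtain ⟨z, hz, x, hx, rfl⟩ := hy
    exact (of_mem_pow hX z hz).mul (hX x hx)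

lemma commute_pow_factorial (hx : HasConjBound n x) (g : G) : Commute (g ^ n !) x := by
  have := hx.finiteIndex_centralizer
  exact mem_centralizer_singleton_iff.1 <|
    pow_mem_of_index_ne_zero_of_dvd FiniteIndex.index_ne_zero g fun k hk hk' ↦
      Nat.dvd_factorial hk (hk'.trans hx.index_centralizer_le)

end HasConjBound

lemma finiteIndex_centralizer_and_index_le {n : ℕ} (W : Finset G)
    (hW : ∀ w ∈ W, HasConjBound n w) :
    (centralizer (W : Set G)).FiniteIndex ∧ (centralizer (W : Set G)).index ≤ n ^ W.card := by
  classical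
  induction W using Finset.induction_on with
  | empty =>
    have h : centralizer (∅ : Set G) = ⊤ := by ext; simp [mem_centralizer_iff]
    simp [h, finiteIndex_iff]
  | insert w W hw ih =>
    obtain ⟨hfin, hle⟩ := ih fun v hv ↦ hW v (Finset.mem_insert_of_mem hv)
    have hw' := hW w (Finset.mem_insert_self w W)
    have := hw'.finiteIndex_centralizer
    have heq : centralizer (insert w W : Finset G) =
        centralizer (W : Set G) ⊓ centralizer {w} := by
      ext; simp [mem_centralizer_iff, and_comm]
    rw [heq, Finset.card_insert_of_notMem hw, pow_succ]
    exact ⟨inferInstance, index_inf_le.trans (Nat.mul_le_mul hle hw'.index_centralizer_le)⟩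

lemma exists_finset_eq_conjugatesOfSet {n : ℕ} (T : Finset G) (hT : ∀ t ∈ T, HasConjBound n t) :
    ∃ W : Finset G, (W : Set G) = Group.conjugatesOfSet T ∧ W.card ≤ T.card * n := by
  have hfin : (Group.conjugatesOfSet (T : Set G)).Finite :=
    T.finite_toSet.biUnion fun t ht ↦ (hT t ht).1
  refine ⟨hfin.toFinset, hfin.coe_toFinset, ?_⟩
  rw [← Set.ncard_eq_toFinset_card _ hfin]
  calc (Group.conjugatesOfSet (T : Set G)).ncard
      ≤ ∑ t ∈ T, (conjugatesOf t).ncard := Finset.set_ncard_biUnion_le T conjugatesOf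
    _ ≤ T.card * n := Finset.sum_le_card_nsmul T _ n fun t ht ↦ (hT t ht).2

/-! ### Finiteness through the transfer to the centre -/

open scoped IsMulCommutative in
/-- The homomorphism `g ↦ g ^ ([G : Z(G)] * e)` from `G` to its centre `Z(G)`, which is the transfer
followed by a power map. -/
noncomputable def transferCenterPowMul (G : Type*) [Group G] [(center G).FiniteIndex] (e : ℕ) :
    G →* center G :=
  (powMonoidHom e).comp (MonoidHom.transferCenterPow G)

lemma transferCenterPowMul_apply [(center G).FiniteIndex] (e : ℕ) (g : G) :
    (transferCenterPowMul G e g : G) = g ^ ((center G).index * e) := by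
  simp [transferCenterPowMul, pow_mul]

/-- The quotients `y * w⁻¹` of elements of `W` with equal `e`-th powers. -/
def quotientsOfEqPow (W : Set G) (e : ℕ) : Set G :=
  {g | ∃ y ∈ W, ∃ w ∈ W, y ^ e = w ^ e ∧ y * w⁻¹ = g}

lemma pow_eq_one_of_mem_closure_quotientsOfEqPow {W : Set G} {e : ℕ}
    [(center (closure W)).FiniteIndex] {g : G} (hg : g ∈ closure (quotientsOfEqPow W e)) :
    g ^ ((center (closure W)).index * e) = 1 := by
  let f := transferCenterPowMul (closure W) e
  have hle : closure (quotientsOfEqPow W e) ≤ f.ker.map (closure W).subtype := by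
    rw [closure_le]
    rintro _ ⟨y, hy, w, hw, hyw, rfl⟩
    let y' : closure W := ⟨y, subset_closure hy⟩
    let w' : closure W := ⟨w, subset_closure hw⟩
    have hyw' : y' ^ e = w' ^ e := Subtype.ext hyw
    have hf : f y' = f w' := by
      apply Subtype.ext
      rw [transferCenterPowMul_apply, transferCenterPowMul_apply, mul_comm, pow_mul, pow_mul, hyw']
    exact ⟨y' * w'⁻¹, by simp [MonoidHom.mem_ker, hf], rfl⟩
  obtain ⟨g, hgf, rfl⟩ := hle hg
  have h : ((f g : closure W) : G) = 1 := by rw [MonoidHom.mem_ker.1 hgf]; rfl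
  rwa [transferCenterPowMul_apply] at h

open scoped IsMulCommutative in
lemma finite_and_card_le_of_forall_pow_eq_one [Group.FG G] [(center G).FiniteIndex] {d : ℕ}
    (hd : 0 < d) (hG : ∀ g : G, g ^ d = 1) :
    Finite G ∧
      Nat.card G ≤ (center G).index * d ^ ((center G).index * Group.rank G) := by
  have : Group.FG (center G) := (center G).fg_of_index_ne_zero
  have hdvd : Nat.card (center G) ∣ d ^ Group.rank (center G) :=
    card_dvd_exponent_pow_rank' _ fun z ↦ Subtype.ext (hG z)
  have hfin : Finite (center G) :=
    Nat.finite_of_card_ne_zero (ne_zero_of_dvd_ne_zero (by positivity) hdvd)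
  refine ⟨(center G).finite_iff_finite_and_finiteIndex.2 ⟨hfin, inferInstance⟩, ?_⟩
  calc Nat.card G = (center G).index * Nat.card (center G) := (center G).index_mul_card.symm
    _ ≤ (center G).index * d ^ Group.rank (center G) := by
      gcongr
      exact Nat.le_of_dvd (by positivity) hdvd
    _ ≤ _ := by
      gcongr
      exact rank_le_index_mul_rank _

lemma finiteIndex_center_and_index_le {n : ℕ} {W : Finset G} (hW : ∀ w ∈ W, HasConjBound n w)
    {L : Subgroup G} (hL : L ≤ closure (W : Set G)) :
    (center L).FiniteIndex ∧ (center L).index ≤ n ^ W.card := by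
  obtain ⟨hfin, hle⟩ := finiteIndex_centralizer_and_index_le W hW
  have hcenter : (centralizer (W : Set G)).subgroupOf L ≤ center L := by
    intro g hg
    rw [mem_subgroupOf, ← centralizer_closure] at hg
    exact mem_center_iff.2 fun l ↦ Subtype.ext (mem_centralizer_iff.1 hg l (hL l.2))
  refine ⟨finiteIndex_of_le hcenter, (index_antitone hcenter).trans (le_trans ?_ hle)⟩
  rw [← relIndex_top_right (centralizer (W : Set G))]
  exact relIndex_le_of_le_right le_top (by simpa using hfin.index_ne_zero)

lemma finite_and_card_le_of_subset_quotientsOfEqPow {n e : ℕ} (he : 0 < e) {W : Finset G}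
    (hW : ∀ w ∈ W, HasConjBound n w) {S : Set G} (hS : S ⊆ quotientsOfEqPow (W : Set G) e) :
    Finite (closure S) ∧
      Nat.card (closure S) ≤
        n ^ W.card * (n ^ W.card * e) ^ (n ^ W.card * (W.card * W.card)) := by
  have hSW : S ⊆ (W : Set G) / W := by
    refine hS.trans ?_
    rintro _ ⟨y, hy, w, hw, -, rfl⟩
    exact ⟨y, hy, w, hw, div_eq_mul_inv y w⟩
  have hWfin : ((W : Set G) / W).Finite := W.finite_toSet.div W.finite_toSet
  have : Finite S := hWfin.subset hSW
  have hrank : Group.rank (closure S) ≤ W.card * W.card := by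
    have h := (Set.ncard_le_ncard hSW hWfin).trans Set.natCard_div_le
    simp only [Nat.card_coe_set_eq, Set.ncard_coe_finset] at h
    exact (rank_closure_finite_le_nat_card S).trans h
  have hSclosure : closure S ≤ closure (W : Set G) := by
    rw [closure_le]
    refine hSW.trans ?_
    rintro _ ⟨y, hy, w, hw, rfl⟩
    exact div_mem (subset_closure hy) (subset_closure hw)
  obtain ⟨_, hM⟩ := finiteIndex_center_and_index_le hW (le_refl (closure (W : Set G)))
  obtain ⟨_, hN⟩ := finiteIndex_center_and_index_le hW hSclosure
  have hi : 0 < (center (closure (W : Set G))).index :=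
    Nat.pos_of_ne_zero FiniteIndex.index_ne_zero
  obtain ⟨hfin, hcard⟩ := finite_and_card_le_of_forall_pow_eq_one (G := closure S)
    (Nat.mul_pos hi he) fun g ↦ Subtype.ext <|
      pow_eq_one_of_mem_closure_quotientsOfEqPow (closure_mono hS g.2)
  refine ⟨hfin, hcard.trans ?_⟩
  gcongr
  exact Nat.mul_pos (hi.trans_le hM) he

/-! ### Coset representatives -/

lemma exists_finset_subset_mul (A : Set G) (C : Subgroup G) [C.FiniteIndex] :
    ∃ B : Finset G, (B : Set G) ⊆ A ∧ B.card ≤ C.index ∧ A ⊆ B * C := by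
  obtain ⟨B, hBA, hB⟩ := A.exists_subset_bijOn ((↑) : G → G ⧸ C)
  have hBfin : B.Finite := Set.Finite.of_finite_image (Set.toFinite _) hB.injOn
  refine ⟨hBfin.toFinset, by simpa using hBA, ?_, fun g hg ↦ ?_⟩
  · rw [← Set.ncard_eq_toFinset_card _ hBfin, ← hB.injOn.ncard_image]
    exact Set.ncard_le_card _
  · obtain ⟨b, hb, hbg⟩ := hB.surjOn ⟨g, hg, rfl⟩
    exact ⟨b, by simpa using hb, b⁻¹ * g, QuotientGroup.eq.1 hbg, mul_inv_cancel_left b g⟩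

-- The sets `X ^ k • {C}` of cosets increase, and are constant from the first repetition onwards.
lemma closure_subset_pow_index_mul {X : Set G} (hone : 1 ∈ X) (hinv : X⁻¹ = X) (C : Subgroup G)
    [C.FiniteIndex] : (closure X : Set G) ⊆ X ^ C.index * C := by
  let O (k : ℕ) : Set (G ⧸ C) := X ^ k • {((1 : G) : G ⧸ C)}
  have hsucc (k : ℕ) : O (k + 1) = X • O k := by simp only [O, pow_succ', mul_smul]
  have hmono : Monotone O := fun k l hkl ↦
    Set.smul_subset_smul_right (Set.pow_right_monotone hone hkl)
  have hcard {k l : ℕ} (hkl : k ≤ l) (h : (O k).ncard = (O l).ncard) : O k = O l :=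
    Set.eq_of_subset_of_ncard_le (hmono hkl) h.ge
  have hstab : O (C.index + 1) = O C.index := by
    refine (hcard C.index.le_succ (Nat.stabilises_of_monotone (f := fun k ↦ (O k).ncard)
      (fun k l hkl ↦ Set.ncard_le_ncard (hmono hkl)) (fun k ↦ Set.ncard_le_card _)
      (fun k hk ↦ ?_) C.index.le_succ).symm).symm
    simp only [hsucc (k + 1), ← hcard k.le_succ hk, ← hsucc k]
  have hX : ∀ x ∈ X, ∀ p ∈ O C.index, x • p ∈ O C.index := fun x hx p hp ↦ by
    rw [← hstab, hsucc]
    exact Set.smul_mem_smul hx hp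
  intro g hg
  have hgO : (g : G ⧸ C) ∈ O C.index := by
    induction hg using closure_induction_left with
    | one => exact hmono (Nat.zero_le _) (by simp [O])
    | mul_left x hx y _ ih => exact hX x hx y ih
    | inv_mul_cancel x hx y _ ih => exact hX x⁻¹ (hinv ▸ Set.inv_mem_inv.2 hx) y ih
  obtain ⟨x, hx, _, rfl, hxg⟩ := hgO
  replace hxg : (x : G ⧸ C) = g := by simpa using! hxg
  exact ⟨x, hx, x⁻¹ * g, QuotientGroup.eq.1 hxg, mul_inv_cancel_left x g⟩

lemma exists_finset_closure_subset_mul {X : Set G} (hone : 1 ∈ X) (hinv : X⁻¹ = X) (C : Subgroup G)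
    [C.FiniteIndex] :
    ∃ B : Finset G, (B : Set G) ⊆ X ^ C.index ∧ B.card ≤ C.index ∧ (closure X : Set G) ⊆ B * C := by
  obtain ⟨B, hBX, hBcard, hB⟩ := exists_finset_subset_mul (X ^ C.index) C
  refine ⟨B, hBX, hBcard, (closure_subset_pow_index_mul hone hinv C).trans ?_⟩
  calc X ^ C.index * (C : Set G) ⊆ B * C * C := Set.mul_subset_mul_right hB
    _ = B * C := by rw [mul_assoc, coe_mul_coe]

/-! ### Centralizers modulo a normal subgroup -/

/-- The centralizer of `H` modulo `N`, consisting of all `k` with `[H, k] ⊆ N`. -/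
def centralizerMod (H N : Subgroup G) [N.Normal] : Subgroup G :=
  (centralizer (H.map (QuotientGroup.mk' N) : Set (G ⧸ N))).comap (QuotientGroup.mk' N)

section centralizerMod

variable {H N : Subgroup G} [N.Normal]

lemma mem_centralizerMod {k : G} : k ∈ centralizerMod H N ↔ ∀ h ∈ H, ⁅h, k⁆ ∈ N := by
  simp only [centralizerMod, mem_comap, mem_centralizer_iff, coe_map, Set.forall_mem_image,
    SetLike.mem_coe, ← commutatorElement_eq_one_iff_mul_comm, ← map_commutatorElement,
    ← MonoidHom.mem_ker, QuotientGroup.ker_mk']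

lemma le_centralizerMod_iff {K : Subgroup G} : K ≤ centralizerMod H N ↔ ⁅H, K⁆ ≤ N := by
  rw [commutator_le]
  exact ⟨fun hle h hh k hk ↦ mem_centralizerMod.1 (hle hk) h hh,
    fun hle k hk ↦ mem_centralizerMod.2 fun h hh ↦ hle h hh k hk⟩

instance centralizerMod_normal [H.Normal] : (centralizerMod H N).Normal := by
  have : (H.map (QuotientGroup.mk' N)).Normal :=
    Normal.map ‹_› _ (QuotientGroup.mk'_surjective N)
  exact Normal.comap inferInstance _

end centralizerMod

/-! ### Orbits of maximal size -/

/-- The orbit `a^H` of `a` under conjugation by `H`. -/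
def conjOrbit (H : Subgroup G) (a : G) : Set G :=
  (fun h ↦ h * a * h⁻¹) '' H

lemma conjOrbit_subset_conjugatesOf (H : Subgroup G) (a : G) : conjOrbit H a ⊆ conjugatesOf a := by
  rintro _ ⟨h, -, rfl⟩
  exact isConj_iff.2 ⟨h, rfl⟩

lemma conjOrbit_mul_eq_smul {H : Subgroup G} {B : Set G} {a u : G} (hBH : B ⊆ H)
    (hB : (H : Set G) ⊆ B * centralizer {a}) (hu : u ∈ centralizer B)
    (hfin : (conjOrbit H (u * a)).Finite)
    (hmax : (conjOrbit H (u * a)).ncard ≤ (conjOrbit H a).ncard) :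
    conjOrbit H (u * a) = u • conjOrbit H a := by
  have hsub : u • conjOrbit H a ⊆ conjOrbit H (u * a) := by
    rintro _ ⟨_, ⟨h, hh, rfl⟩, rfl⟩
    obtain ⟨b, hb, c, hc, rfl⟩ := hB hh
    have hca : c * a * c⁻¹ = a := by
      rw [mem_centralizer_singleton_iff.1 hc, mul_inv_cancel_right]
    have hbu : b * u = u * b := mem_centralizer_iff.1 hu b hb
    refine ⟨b, hBH hb, ?_⟩
    calc b * (u * a) * b⁻¹ = u * (b * a * b⁻¹) := by simp only [← mul_assoc, hbu]
      _ = u * (b * (c * a * c⁻¹) * b⁻¹) := by rw [hca]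
      _ = u * (b * c * a * (b * c)⁻¹) := by group
  refine (Set.eq_of_subset_of_ncard_le hsub ?_ hfin).symm
  rwa [Set.ncard_smul_set]

lemma mem_centralizerMod_of_conjOrbit_mul_subset {H N : Subgroup G} [N.Normal] {a u : G}
    (ha : a ∈ centralizerMod H N) (hau : conjOrbit H (u * a) ⊆ u • conjOrbit H a) :
    u ∈ centralizerMod H N := by
  rw [mem_centralizerMod] at ha ⊢
  intro h hh
  obtain ⟨_, ⟨g, hg, rfl⟩, hgh⟩ := hau ⟨h, hh, rfl⟩
  replace hgh : u * (g * a * g⁻¹) = h * (u * a) * h⁻¹ := hgh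
  have hcomm : ⁅h, u⁆ = u * (⁅g, a⁆ * ⁅h, a⁆⁻¹) * u⁻¹ := by
    calc ⁅h, u⁆ = h * (u * a) * h⁻¹ * (h * a * h⁻¹)⁻¹ * u⁻¹ := by group
      _ = u * (g * a * g⁻¹) * (h * a * h⁻¹)⁻¹ * u⁻¹ := by rw [← hgh]
      _ = u * (⁅g, a⁆ * ⁅h, a⁆⁻¹) * u⁻¹ := by group
  rw [hcomm]
  exact Normal.conj_mem ‹_› _ (mul_mem (ha g hg) (inv_mem (ha h hh))) u

lemma exists_maximal_ncard_conjOrbit {n : ℕ} {K : Subgroup G} (hK : ∀ x ∈ K, HasConjBound n x)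
    (H : Subgroup G) :
    ∃ a ∈ K, ∀ c ∈ K, (conjOrbit H c).ncard ≤ (conjOrbit H a).ncard := by
  have hbdd : BddAbove ((fun a ↦ (conjOrbit H a).ncard) '' K) := by
    refine ⟨n, ?_⟩
    rintro _ ⟨a, ha, rfl⟩
    exact (Set.ncard_le_ncard (conjOrbit_subset_conjugatesOf H a) (hK a ha).1).trans (hK a ha).2
  obtain ⟨a, ha, hmax⟩ := hbdd.finite.exists_maximalFor' _ _ ⟨1, K.one_mem⟩
  exact ⟨a, ha, fun c hc ↦ (le_total _ _).elim id (hmax hc)⟩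

lemma exists_finset_forall_le_centralizerMod {n : ℕ} {X : Set G} (hone : 1 ∈ X) (hinv : X⁻¹ = X)
    (hX : ∀ x ∈ X, HasConjBound n x) {K : Subgroup G} (hK : ∀ x ∈ K, HasConjBound n x) :
    ∃ T : Finset G, T.card ≤ (n ^ n) ^ n + 1 ∧ (T : Set G) ⊆ K ∧
      ∀ (N : Subgroup G) [N.Normal], (T : Set G) ⊆ centralizerMod (closure X) N →
        K ≤ centralizerMod (closure X) N := by
  classical
  obtain ⟨a, haK, hmax⟩ := exists_maximal_ncard_conjOrbit hK (closure X)
  have := (hK a haK).finiteIndex_centralizer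
  have hindex := (hK a haK).index_centralizer_le
  have hn : 0 < n := (hK a haK).pos
  obtain ⟨B, hBX, hBcard, hB⟩ := exists_finset_closure_subset_mul hone hinv (centralizer {a})
  have hBH : (B : Set G) ⊆ closure X := fun b hb ↦
    closure_pow_le (subset_closure (hBX hb))
  have hBbound : ∀ b ∈ B, HasConjBound (n ^ n) b := fun b hb ↦
    HasConjBound.of_mem_pow hX b (Set.pow_right_monotone hone hindex (hBX hb))
  obtain ⟨_, hU⟩ := finiteIndex_centralizer_and_index_le B hBbound
  obtain ⟨T, hTK, hTcard, hT⟩ := exists_finset_subset_mul (K : Set G) (centralizer (B : Set G))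
  refine ⟨insert a T, (Finset.card_insert_le a T).trans (Nat.succ_le_succ ?_), ?_, ?_⟩
  · exact (hTcard.trans hU).trans (Nat.pow_le_pow_right (by positivity) (hBcard.trans hindex))
  · simpa [Set.insert_subset_iff] using ⟨haK, hTK⟩
  intro N _ hTN k hk
  rw [Finset.coe_insert, Set.insert_subset_iff] at hTN
  obtain ⟨t, ht, u, hu, rfl⟩ := hT hk
  have huK : u ∈ K := (mul_mem_cancel_left (hTK ht)).1 hk
  have huaK : u * a ∈ K := mul_mem huK haK
  have horbit := conjOrbit_mul_eq_smul hBH hB hu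
    ((hK _ huaK).1.subset (conjOrbit_subset_conjugatesOf _ _)) (hmax _ huaK)
  exact mul_mem (hTN.2 ht) (mem_centralizerMod_of_conjOrbit_mul_subset hTN.1 horbit.subset)

/-! ### The derived subgroup of the normal closure -/

lemma inv_conjugatesOfSet (K : Subgroup G) :
    (Group.conjugatesOfSet (K : Set G))⁻¹ = Group.conjugatesOfSet K := by
  have hsub : (Group.conjugatesOfSet (K : Set G))⁻¹ ⊆ Group.conjugatesOfSet K := by
    intro x hx
    obtain ⟨k, hk, hkx⟩ := Group.mem_conjugatesOfSet_iff.1 (Set.mem_inv.1 hx)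
    obtain ⟨c, hc⟩ := isConj_iff.1 hkx
    refine Group.mem_conjugatesOfSet_iff.2 ⟨k⁻¹, K.inv_mem hk, isConj_iff.2 ⟨c, ?_⟩⟩
    rw [← conj_inv, hc, inv_inv]
  exact hsub.antisymm (Set.inv_subset.1 hsub)

lemma commute_pow_factorial_of_mem_closure {n : ℕ} {X : Set G} (hX : ∀ x ∈ X, HasConjBound n x)
    (g : G) {h : G} (hh : h ∈ closure X) : Commute h (g ^ n !) := by
  have hle : closure X ≤ centralizer {g ^ n !} := (closure_le _).2 fun x hx ↦
    mem_centralizer_singleton_iff.2 ((hX x hx).commute_pow_factorial g).symm.eq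
  exact mem_centralizer_singleton_iff.1 (hle hh)

/-- The set of commutators `[h, t]` with `h ∈ H` and `t ∈ T`. -/
def commutatorsWith (H : Subgroup G) (T : Set G) : Set G :=
  {g | ∃ h ∈ H, ∃ t ∈ T, ⁅h, t⁆ = g}

lemma conjugatesOfSet_commutatorsWith_subset {H : Subgroup G} {T : Set G} {e : ℕ}
    (he : ∀ t ∈ T, ∀ h ∈ H, Commute h (t ^ e)) :
    Group.conjugatesOfSet (commutatorsWith H T) ⊆ quotientsOfEqPow (Group.conjugatesOfSet T) e := by
  intro x hx
  obtain ⟨_, ⟨h, hh, t, ht, rfl⟩, hconj⟩ := Group.mem_conjugatesOfSet_iff.1 hx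
  obtain ⟨c, rfl⟩ := isConj_iff.1 hconj
  have hmem (g : G) : g * t * g⁻¹ ∈ Group.conjugatesOfSet T :=
    Group.conj_mem_conjugatesOfSet (Group.subset_conjugatesOfSet ht)
  refine ⟨c * h * t * (c * h)⁻¹, hmem _, c * t * c⁻¹, hmem c, ?_, by group⟩
  calc (c * h * t * (c * h)⁻¹) ^ e = c * (h * t ^ e * h⁻¹) * c⁻¹ := by rw [conj_pow]; group
    _ = (c * t * c⁻¹) ^ e := by rw [(he t ht h hh).eq, mul_inv_cancel_right, conj_pow]

/-- A bound for the order of the derived subgroup of `⟨K^G⟩` when every element of `K` has at most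
`n` conjugates. -/
def derivedBound (n : ℕ) : ℕ :=
  let r := ((n ^ n) ^ n + 1) * n
  n ^ r * (n ^ r * n !) ^ (n ^ r * (r * r))

theorem stmt_3_general {n : ℕ} {K : Subgroup G} (hK : ∀ x ∈ K, HasConjBound n x) :
    Finite (⁅normalClosure (K : Set G), normalClosure (K : Set G)⁆ : Subgroup G) ∧
      Nat.card (⁅normalClosure (K : Set G), normalClosure (K : Set G)⁆ : Subgroup G) ≤
        derivedBound n := by
  set H := normalClosure (K : Set G)
  have hX : ∀ x ∈ Group.conjugatesOfSet (K : Set G), HasConjBound n x := fun x hx ↦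
    let ⟨k, hk, hkx⟩ := Group.mem_conjugatesOfSet_iff.1 hx
    (hK k hk).of_isConj hkx
  obtain ⟨T, hTcard, hTK, hT⟩ := exists_finset_forall_le_centralizerMod
    (Group.subset_conjugatesOfSet K.one_mem) (inv_conjugatesOfSet K) hX hK
  obtain ⟨W, hWT, hWcard⟩ := exists_finset_eq_conjugatesOfSet T fun t ht ↦ hK t (hTK ht)
  set N := normalClosure (commutatorsWith H T)
  have hHN : ⁅H, H⁆ ≤ N := by
    have hKN : K ≤ centralizerMod H N := hT N fun t ht ↦ mem_centralizerMod.2 fun h hh ↦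
      subset_normalClosure ⟨h, hh, t, ht, rfl⟩
    exact le_centralizerMod_iff.1 (normalClosure_le_normal hKN)
  have hW : ∀ w ∈ W, HasConjBound n w := fun w hw ↦
    hX w (Group.conjugatesOfSet_mono hTK (hWT ▸ hw))
  have hN : Group.conjugatesOfSet (commutatorsWith H T) ⊆ quotientsOfEqPow W n ! := by
    rw [hWT]
    exact conjugatesOfSet_commutatorsWith_subset fun t _ h hh ↦
      commute_pow_factorial_of_mem_closure hX t hh
  obtain ⟨hfin, hcard⟩ : Finite N ∧ Nat.card N ≤ _ :=
    finite_and_card_le_of_subset_quotientsOfEqPow n.factorial_pos hW hN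
  have hr : W.card ≤ ((n ^ n) ^ n + 1) * n := hWcard.trans (Nat.mul_le_mul_right n hTcard)
  have hn : 0 < n := (hK 1 K.one_mem).pos
  refine ⟨Finite.Set.subset (N : Set G) hHN, (card_le_of_le hHN).trans (hcard.trans ?_)⟩
  have hpos : 0 < n ^ (((n ^ n) ^ n + 1) * n) * n ! := by positivity
  simp only [derivedBound]
  gcongr

/-- Main theorem: if `K ≤ G` satisfies `|x^G| ≤ n` for all `x ∈ K`, and
`H = ⟨K^G⟩` is the normal closure of `K`, then `|H'|` is finite and `n`-bounded. -/
theorem stmt_3 :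
    ∃ f : ℕ → ℕ, ∀ n : ℕ, 0 < n → ∀ (G : Type) [Group G] (K : Subgroup G),
      (∀ x ∈ K, (conjugatesOf x).Finite ∧ Nat.card (conjugatesOf x) ≤ n) →
      ∀ (H : Subgroup G), H = Subgroup.normalClosure (K : Set G) →
        Finite (⁅H, H⁆ : Subgroup G) ∧ Nat.card (⁅H, H⁆ : Subgroup G) ≤ f n :=
  ⟨derivedBound, fun _ _ _ _ _ hK _ hH ↦ hH ▸ stmt_3_general hK⟩
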